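/- The group ring Z_n Q_8 of the quaternion group Q_8 over the integers modulo n (n ≥ 2) is reversible if and only if n = 2. -/

import Mathlib

/-- Exclusive or, in a form that reduces quickly. -/
def bx (a b : Bool) : Bool := cond a (cond b false true) b

/-- Conjunction, in a form that reduces quickly. -/
def ba (a b : Bool) : Bool := cond a b false

theorem bx_bx (a b : Bool) : bx (bx a b) b = a := by cases a <;> cases b <;> rfl

open QuaternionGroup in
/-- Enumeration of the elements of `Q₈`. -/
def qE : Fin 8 → QuaternionGroup 2 := ![a 0, a 1, a 2, a 3, xa 0, xa 1, xa 2, xa 3]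

/-- Multiplication of coefficient vectors in the group ring of `Q₈`. -/
def cv {R : Type} [CommRing R] (f g : Fin 8 → R) : Fin 8 → R := ![
  f 0 * g 0 + f 1 * g 3 + f 2 * g 2 + f 3 * g 1 + f 4 * g 6 + f 5 * g 7 + f 6 * g 4 + f 7 * g 5,
  f 0 * g 1 + f 1 * g 0 + f 2 * g 3 + f 3 * g 2 + f 4 * g 7 + f 5 * g 4 + f 6 * g 5 + f 7 * g 6,
  f 0 * g 2 + f 1 * g 1 + f 2 * g 0 + f 3 * g 3 + f 4 * g 4 + f 5 * g 5 + f 6 * g 6 + f 7 * g 7,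
  f 0 * g 3 + f 1 * g 2 + f 2 * g 1 + f 3 * g 0 + f 4 * g 5 + f 5 * g 6 + f 6 * g 7 + f 7 * g 4,
  f 0 * g 4 + f 1 * g 5 + f 2 * g 6 + f 3 * g 7 + f 4 * g 0 + f 5 * g 3 + f 6 * g 2 + f 7 * g 1,
  f 0 * g 5 + f 1 * g 6 + f 2 * g 7 + f 3 * g 4 + f 4 * g 1 + f 5 * g 0 + f 6 * g 3 + f 7 * g 2,
  f 0 * g 6 + f 1 * g 7 + f 2 * g 4 + f 3 * g 5 + f 4 * g 2 + f 5 * g 1 + f 6 * g 0 + f 7 * g 3,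
  f 0 * g 7 + f 1 * g 4 + f 2 * g 5 + f 3 * g 6 + f 4 * g 3 + f 5 * g 2 + f 6 * g 1 + f 7 * g 0]

def bt0 (a0 a1 a2 a3 a4 a5 a6 a7 b0 b1 b2 b3 b4 b5 b6 b7 : Bool) : Bool :=
  bx (bx (bx (bx (bx (bx (bx (ba a0 b0) (ba a1 b3)) (ba a2 b2)) (ba a3 b1)) (ba a4 b6)) (ba a5 b7)) (ba a6 b4)) (ba a7 b5)

def bt1 (a0 a1 a2 a3 a4 a5 a6 a7 b0 b1 b2 b3 b4 b5 b6 b7 : Bool) : Bool :=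
  bx (bx (bx (bx (bx (bx (bx (ba a0 b1) (ba a1 b0)) (ba a2 b3)) (ba a3 b2)) (ba a4 b7)) (ba a5 b4)) (ba a6 b5)) (ba a7 b6)

def bt2 (a0 a1 a2 a3 a4 a5 a6 a7 b0 b1 b2 b3 b4 b5 b6 b7 : Bool) : Bool :=
  bx (bx (bx (bx (bx (bx (bx (ba a0 b2) (ba a1 b1)) (ba a2 b0)) (ba a3 b3)) (ba a4 b4)) (ba a5 b5)) (ba a6 b6)) (ba a7 b7)

def bt3 (a0 a1 a2 a3 a4 a5 a6 a7 b0 b1 b2 b3 b4 b5 b6 b7 : Bool) : Bool :=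
  bx (bx (bx (bx (bx (bx (bx (ba a0 b3) (ba a1 b2)) (ba a2 b1)) (ba a3 b0)) (ba a4 b5)) (ba a5 b6)) (ba a6 b7)) (ba a7 b4)

def bt4 (a0 a1 a2 a3 a4 a5 a6 a7 b0 b1 b2 b3 b4 b5 b6 b7 : Bool) : Bool :=
  bx (bx (bx (bx (bx (bx (bx (ba a0 b4) (ba a1 b5)) (ba a2 b6)) (ba a3 b7)) (ba a4 b0)) (ba a5 b3)) (ba a6 b2)) (ba a7 b1)

def bt5 (a0 a1 a2 a3 a4 a5 a6 a7 b0 b1 b2 b3 b4 b5 b6 b7 : Bool) : Bool :=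
  bx (bx (bx (bx (bx (bx (bx (ba a0 b5) (ba a1 b6)) (ba a2 b7)) (ba a3 b4)) (ba a4 b1)) (ba a5 b0)) (ba a6 b3)) (ba a7 b2)

def bt6 (a0 a1 a2 a3 a4 a5 a6 a7 b0 b1 b2 b3 b4 b5 b6 b7 : Bool) : Bool :=
  bx (bx (bx (bx (bx (bx (bx (ba a0 b6) (ba a1 b7)) (ba a2 b4)) (ba a3 b5)) (ba a4 b2)) (ba a5 b1)) (ba a6 b0)) (ba a7 b3)

def bt7 (a0 a1 a2 a3 a4 a5 a6 a7 b0 b1 b2 b3 b4 b5 b6 b7 : Bool) : Bool :=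
  bx (bx (bx (bx (bx (bx (bx (ba a0 b7) (ba a1 b4)) (ba a2 b5)) (ba a3 b6)) (ba a4 b3)) (ba a5 b2)) (ba a6 b1)) (ba a7 b0)

def isZ (a0 a1 a2 a3 a4 a5 a6 a7 b0 b1 b2 b3 b4 b5 b6 b7 : Bool) : Bool :=
  !(bt0 a0 a1 a2 a3 a4 a5 a6 a7 b0 b1 b2 b3 b4 b5 b6 b7) && !(bt1 a0 a1 a2 a3 a4 a5 a6 a7 b0 b1 b2 b3 b4 b5 b6 b7) && !(bt2 a0 a1 a2 a3 a4 a5 a6 a7 b0 b1 b2 b3 b4 b5 b6 b7) && !(bt3 a0 a1 a2 a3 a4 a5 a6 a7 b0 b1 b2 b3 b4 b5 b6 b7) && !(bt4 a0 a1 a2 a3 a4 a5 a6 a7 b0 b1 b2 b3 b4 b5 b6 b7) && !(bt5 a0 a1 a2 a3 a4 a5 a6 a7 b0 b1 b2 b3 b4 b5 b6 b7) && !(bt6 a0 a1 a2 a3 a4 a5 a6 a7 b0 b1 b2 b3 b4 b5 b6 b7) && !(bt7 a0 a1 a2 a3 a4 a5 a6 a7 b0 b1 b2 b3 b4 b5 b6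 b7)

def allB (f : Bool → Bool) : Bool := f true && f false

theorem allB_spec {f : Bool → Bool} (h : allB f = true) (b : Bool) : f b = true := by
  unfold allB at h
  cases b <;> simp_all

/-- Some coefficient of the product in the quotient `𝔽₂[Q₈ / Z(Q₈)]` is nonzero. -/
def nq (p0 p1 p4 p5 q0 q1 q4 q5 : Bool) : Bool :=
  bx (bx (bx (ba p0 q0) (ba p1 q1)) (ba p4 q4)) (ba p5 q5) ||
  bx (bx (bx (ba p0 q1) (ba p1 q0)) (ba p4 q5)) (ba p5 q4) ||
  bx (bx (bx (ba p0 q4) (ba p1 q5)) (ba p4 q0)) (ba p5 q1) ||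
  bx (bx (bx (ba p0 q5) (ba p1 q4)) (ba p4 q1)) (ba p5 q0)

/-- The commutator vanishes. -/
def cz (p1 p4 p5 q1 q4 q5 : Bool) : Bool :=
  !(bx (ba p4 q5) (ba p5 q4)) && !(bx (ba p1 q5) (ba p5 q1)) && !(bx (ba p1 q4) (ba p4 q1))

/-- Evaluate `b` before passing it on. -/
def letB (b : Bool) (f : Bool → Bool) : Bool := cond b (f true) (f false)

theorem letB_eq (b : Bool) (f : Bool → Bool) : letB b f = f b := by
  cases b <;> rfl

set_option maxRecDepth 100000 in
theorem bigCheck : (allB fun p0 => allB fun p1 => allB fun p4 => allB fun p5 => allB fun q0 => allB fun q1 => allB fun q4 => allB fun q5 =>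
    nq p0 p1 p4 p5 q0 q1 q4 q5 || (cz p1 p4 p5 q1 q4 q5 ||
    (allB fun a2 => letB (bx p0 a2) fun a0 => allB fun a3 => letB (bx p1 a3) fun a1 => allB fun a6 => letB (bx p4 a6) fun a4 => allB fun a7 => letB (bx p5 a7) fun a5 => allB fun b2 => letB (bx q0 b2) fun b0 => allB fun b3 => letB (bx q1 b3) fun b1 => allB fun b6 => letB (bx q4 b6) fun b4 => allB fun b7 => letB (bx q5 b7) fun b5 =>
    !(isZ a0 a1 a2 a3 a4 a5 a6 a7 b0 b1 b2 b3 b4 b5 b6 b7)))) = true := by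
  decide +kernel

theorem isZ_comm (a0 a1 a2 a3 a4 a5 a6 a7 b0 b1 b2 b3 b4 b5 b6 b7 : Bool)
    (hq : nq (bx a0 a2) (bx a1 a3) (bx a4 a6) (bx a5 a7) (bx b0 b2) (bx b1 b3) (bx b4 b6) (bx b5 b7) = false)
    (h : isZ a0 a1 a2 a3 a4 a5 a6 a7 b0 b1 b2 b3 b4 b5 b6 b7 = true) :
    cz (bx a1 a3) (bx a4 a6) (bx a5 a7) (bx b1 b3) (bx b4 b6) (bx b5 b7) = true := by
  have := bigCheck
  replace this := allB_spec this (bx a0 a2)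
  replace this := allB_spec this (bx a1 a3)
  replace this := allB_spec this (bx a4 a6)
  replace this := allB_spec this (bx a5 a7)
  replace this := allB_spec this (bx b0 b2)
  replace this := allB_spec this (bx b1 b3)
  replace this := allB_spec this (bx b4 b6)
  replace this := allB_spec this (bx b5 b7)
  rw [hq, Bool.false_or, Bool.or_eq_true] at this
  rcases this with this | this
  · exact this
  · replace this := allB_spec this a2
    rw [letB_eq] at this
    replace this := allB_spec this a3
    rw [letB_eq] at this
    replace this := allB_spec this a6
    rw [letB_eq] at this
    replace this := allB_spec this a7
    rw [letB_eq] at this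
    replace this := allB_spec this b2
    rw [letB_eq] at this
    replace this := allB_spec this b3
    rw [letB_eq] at this
    replace this := allB_spec this b6
    rw [letB_eq] at this
    replace this := allB_spec this b7
    rw [letB_eq] at this
    simp only [bx_bx] at this
    simp [h] at this

open QuaternionGroup

theorem qE_surj (x : QuaternionGroup 2) : ∃ k, qE k = x := by
  revert x; decide

theorem sum_qE {R : Type} [CommRing R] (F : QuaternionGroup 2 → R) :
    ∑ x, F x = ∑ k, F (qE k) := by
  symm
  apply Function.Bijective.sum_comp (e := qE)
  decide

theorem coeff_mul_qE {R : Type} [CommRing R] (x y : MonoidAlgebra R (QuaternionGroup 2)) (k : Fin 8) :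
    (x * y).coeff (qE k) = cv (fun i => x.coeff (qE i)) (fun i => y.coeff (qE i)) k := by
  have key : (x * y).coeff (qE k) =
      ∑ i, x.coeff (qE i) * y.coeff ((qE i)⁻¹ * qE k) := by
    rw [MonoidAlgebra.coeff_mul_apply_left, Finsupp.sum_fintype _ _ (by simp), sum_qE]
  rw [key, Fin.sum_univ_eight]
  fin_cases k <;> rfl

theorem eq_zero_iff {R : Type} [CommRing R] (x : MonoidAlgebra R (QuaternionGroup 2)) :
    x = 0 ↔ ∀ k, x.coeff (qE k) = 0 := by
  constructor
  · rintro rfl k; rfl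
  · intro h
    ext g
    obtain ⟨k, rfl⟩ := qE_surj g
    exact h k

/-- Elements from coefficient vectors. -/
noncomputable def mkQ {R : Type} [CommRing R] (f : Fin 8 → R) :
    MonoidAlgebra R (QuaternionGroup 2) :=
  ∑ i, MonoidAlgebra.single (qE i) (f i)

theorem qE_inj : Function.Injective qE := by decide

theorem coeff_mkQ {R : Type} [CommRing R] (f : Fin 8 → R) (k : Fin 8) :
    (mkQ f).coeff (qE k) = f k := by
  classical
  simp [mkQ, MonoidAlgebra.coeff_sum, Finsupp.single_apply, qE_inj.eq_iff]

set_option maxHeartbeats 1000000 in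
theorem cv_cast1 {n : ℕ} (m : ℕ) (f g : Fin 8 → ℤ) (i : Fin 8) :
    cv (fun i => ((m * f i : ℤ) : ZMod n)) (fun i => ((g i : ℤ) : ZMod n)) i
      = ((m * cv f g i : ℤ) : ZMod n) := by
  revert i
  simp only [cv, Fin.forall_fin_succ, Int.cast_mul]
  refine ⟨?_, ?_, ?_, ?_, ?_, ?_, ?_, ?_, fun i => i.elim0⟩
  all_goals
    (simp only [Matrix.cons_val_zero, Matrix.cons_val_succ, Int.cast_add, Int.cast_mul]; ring)

set_option maxHeartbeats 1000000 in
theorem cv_cast2 {n : ℕ} (m : ℕ) (f g : Fin 8 → ℤ) (i : Fin 8) :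
    cv (fun i => ((g i : ℤ) : ZMod n)) (fun i => ((m * f i : ℤ) : ZMod n)) i
      = ((m * cv g f i : ℤ) : ZMod n) := by
  revert i
  simp only [cv, Fin.forall_fin_succ, Int.cast_mul]
  refine ⟨?_, ?_, ?_, ?_, ?_, ?_, ?_, ?_, fun i => i.elim0⟩
  all_goals
    (simp only [Matrix.cons_val_zero, Matrix.cons_val_succ, Int.cast_add, Int.cast_mul]; ring)

theorem not_rev (d m : ℕ) (hm : 0 < m) (f g : Fin 8 → ℤ)
    (h0 : ∀ k, (d : ℤ) ∣ cv f g k) (k : Fin 8) (h1 : ¬ (d : ℤ) ∣ cv g f k) :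
    ¬ (∀ a b : MonoidAlgebra (ZMod (d * m)) (QuaternionGroup 2), a * b = 0 → b * a = 0) := by
  intro H
  have hcast1 := cv_cast1 (n := d * m) m f g
  have hcast2 := cv_cast2 (n := d * m) m f g
  have := H (mkQ fun i => ((m * f i : ℤ) : ZMod (d * m))) (mkQ fun i => ((g i : ℤ) : ZMod (d * m))) (by
    rw [eq_zero_iff]
    intro i
    rw [coeff_mul_qE]
    simp only [coeff_mkQ]
    rw [hcast1, ZMod.intCast_zmod_eq_zero_iff_dvd, Nat.cast_mul, mul_comm]
    exact mul_dvd_mul_left _ (h0 i))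
  rw [eq_zero_iff] at this
  have h2 := this k
  rw [coeff_mul_qE] at h2
  simp only [coeff_mkQ] at h2
  rw [hcast2, ZMod.intCast_zmod_eq_zero_iff_dvd, Nat.cast_mul, mul_comm] at h2
  exact h1 ((mul_dvd_mul_iff_left (by positivity)).1 h2)

/-- Booleans as elements of `ZMod 2`. -/
def phi (b : Bool) : ZMod 2 := if b then 1 else 0

theorem phi_surj (x : ZMod 2) : ∃ b, phi b = x := by revert x; decide
theorem phi_and (a b : Bool) : phi a * phi b = phi (ba a b) := by revert a b; decide
theorem phi_xor (a b : Bool) : phi a + phi b = phi (bx a b) := by revert a b; decide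
theorem phi_zero (a : Bool) : phi a = 0 ↔ a = false := by revert a; decide

theorem isZ_iff (p q : Fin 8 → Bool) : (∀ k, cv (fun i => phi (p i)) (fun i => phi (q i)) k = 0) ↔
    isZ (p 0) (p 1) (p 2) (p 3) (p 4) (p 5) (p 6) (p 7)
      (q 0) (q 1) (q 2) (q 3) (q 4) (q 5) (q 6) (q 7) = true := by
  simp only [cv, phi_and, phi_xor, isZ, Bool.and_eq_true, Bool.not_eq_true']
  rw [← phi_zero, ← phi_zero, ← phi_zero, ← phi_zero, ← phi_zero, ← phi_zero, ← phi_zero,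
    ← phi_zero]
  constructor
  · intro h
    exact ⟨⟨⟨⟨⟨⟨⟨h 0, h 1⟩, h 2⟩, h 3⟩, h 4⟩, h 5⟩, h 6⟩, h 7⟩
  · rintro ⟨⟨⟨⟨⟨⟨⟨h0, h1⟩, h2⟩, h3⟩, h4⟩, h5⟩, h6⟩, h7⟩ k
    fin_cases k
    exacts [h0, h1, h2, h3, h4, h5, h6, h7]

theorem nq_false (p q : Fin 8 → Bool)
    (h : ∀ k, cv (fun i => phi (p i)) (fun i => phi (q i)) k = 0) :
    nq (bx (p 0) (p 2)) (bx (p 1) (p 3)) (bx (p 4) (p 6)) (bx (p 5) (p 7))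
      (bx (q 0) (q 2)) (bx (q 1) (q 3)) (bx (q 4) (q 6)) (bx (q 5) (q 7)) = false := by
  simp only [nq, Bool.or_eq_false_iff]
  rw [← phi_zero, ← phi_zero, ← phi_zero, ← phi_zero]
  simp only [← phi_and, ← phi_xor]
  have e (k l : Fin 8) := congrArg₂ (· + ·) (h k) (h l)
  have e0 := e 0 2
  have e1 := e 1 3
  have e4 := e 4 6
  have e5 := e 5 7
  simp [cv] at e0 e1 e4 e5
  refine ⟨⟨⟨?_, ?_⟩, ?_⟩, ?_⟩
  · linear_combination e0
  · linear_combination e1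
  · linear_combination e4
  · linear_combination e5

theorem rev_two (a b : MonoidAlgebra (ZMod 2) (QuaternionGroup 2)) (h : a * b = 0) :
    b * a = 0 := by
  rw [eq_zero_iff] at h ⊢
  choose p hp using fun i => phi_surj (a.coeff (qE i))
  choose q hq using fun i => phi_surj (b.coeff (qE i))
  simp only [coeff_mul_qE, ← hp, ← hq] at h ⊢
  have hn := nq_false p q h
  have hc := isZ_comm _ _ _ _ _ _ _ _ _ _ _ _ _ _ _ _ hn ((isZ_iff p q).1 h)
  simp only [cz, Bool.and_eq_true, Bool.not_eq_true'] at hc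
  rw [← phi_zero, ← phi_zero, ← phi_zero] at hc
  simp only [← phi_and, ← phi_xor, ← CharTwo.sub_eq_add] at hc
  obtain ⟨⟨h1, h2⟩, h3⟩ := hc
  have e0 := h 0
  have e1 := h 1
  have e2 := h 2
  have e3 := h 3
  have e4 := h 4
  have e5 := h 5
  have e6 := h 6
  have e7 := h 7
  simp [cv] at e0 e1 e2 e3 e4 e5 e6 e7
  intro k
  fin_cases k <;> simp [cv]
  · linear_combination e0
  · linear_combination e1 + h1
  · linear_combination e2
  · first | linear_combination e3 + h1 | linear_combination e3 - h1
  · first | linear_combination e4 + h2 | linear_combination e4 - h2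
  · linear_combination e5 + h3
  · linear_combination e6 + h2
  · first | linear_combination e7 + h3 | linear_combination e7 - h3

theorem not_rev_four (m : ℕ) (hm : 0 < m) :
    ¬ (∀ a b : MonoidAlgebra (ZMod (4 * m)) (QuaternionGroup 2), a * b = 0 → b * a = 0) := by
  refine not_rev 4 m hm ![-1, 0, 0, 1, -1, -1, 0, 0] ![-1, 0, 0, -1, -1, 0, 0, 1] ?_ 4 ?_
  · decide
  · decide

theorem not_rev_odd (p : ℕ) (hp : p.Prime) (hp2 : p ≠ 2) (m : ℕ) (hm : 0 < m) :
    ¬ (∀ a b : MonoidAlgebra (ZMod (p * m)) (QuaternionGroup 2), a * b = 0 → b * a = 0) := by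
  have hP : Prime (p : ℤ) := Nat.prime_iff_prime_int.1 hp
  have hn2 : ¬ (p : ℤ) ∣ 2 := by
    intro h
    exact hp2 ((Nat.prime_dvd_prime_iff_eq hp Nat.prime_two).1 (by exact_mod_cast h))
  obtain ⟨u, v, huv, hv⟩ : ∃ u v : ℤ, (p : ℤ) ∣ u ^ 2 + v ^ 2 + 1 ∧ ¬ (p : ℤ) ∣ v := by
    have : Fact p.Prime := ⟨hp⟩
    obtain ⟨a, b, k, -, -, h⟩ := Int.exists_sq_add_sq_add_one_eq_mul p
    have h' : (a : ℤ) ^ 2 + (b : ℤ) ^ 2 + 1 = p * k := by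
      rw [mul_comm]; exact_mod_cast h
    by_cases hb : (p : ℤ) ∣ b
    · refine ⟨b, a, ⟨k, by linarith⟩, fun ha => hP.not_dvd_one ?_⟩
      have : (1 : ℤ) = p * k - a ^ 2 - b ^ 2 := by linarith
      rw [this]
      exact dvd_sub (dvd_sub (dvd_mul_right _ _) (dvd_pow ha two_ne_zero))
        (dvd_pow hb two_ne_zero)
    · exact ⟨a, b, ⟨k, h'⟩, hb⟩
  refine not_rev p m hm ![1, u, -1, -u, v, 0, -v, 0] ![0, 1, -u, 0, 0, -v, 0, 0] ?_ 5 ?_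
  · obtain ⟨c, hc⟩ := huv
    intro k
    fin_cases k
    · exact ⟨0, by simp [cv]; try ring⟩
    · exact ⟨c, by simp [cv]; linarith⟩
    · exact ⟨0, by simp [cv]; try ring⟩
    · exact ⟨-c, by simp [cv]; linarith⟩
    · exact ⟨0, by simp [cv]; try ring⟩
    · exact ⟨0, by simp [cv]; try ring⟩
    · exact ⟨0, by simp [cv]; try ring⟩
    · exact ⟨0, by simp [cv]; try ring⟩
  · intro h
    have : (p : ℤ) ∣ 2 * v := by
      rw [← dvd_neg]
      have e : cv ![0, 1, -u, 0, 0, -v, 0, 0] ![1, u, -1, -u, v, 0, -v, 0] (5 : Fin 8)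
          = -(2 * v) := by
        simp [cv]; try ring
      rw [e] at h
      exact h
    rcases hP.dvd_or_dvd this with h | h
    exacts [hn2 h, hv h]

/-- `QuaternionGroup 2` is the quaternion group `Q₈` of order 8. -/
theorem stmt_13 (n : ℕ) (hn : 2 ≤ n) :
    (∀ a b : MonoidAlgebra (ZMod n) (QuaternionGroup 2), a * b = 0 → b * a = 0) ↔
      n = 2 := by
  constructor
  · intro H
    by_contra hne
    rcases Nat.four_dvd_or_exists_odd_prime_and_dvd_of_two_lt (n := n) (by omega) with h | ⟨p, hp, h, ho⟩
    · obtain ⟨m, rfl⟩ := h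
      exact not_rev_four m (by omega) H
    · obtain ⟨m, rfl⟩ := h
      refine not_rev_odd p hp ?_ m (Nat.pos_of_ne_zero ?_) H
      · rintro rfl; exact absurd ho (by decide)
      · rintro rfl; omega
  · rintro rfl
    exact rev_two
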